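/- arXiv:1601.05383 — 2 statements merged into one kernel-verified Lean document; each statement's English description precedes it below -/
import Mathlib

section
/- Let R be a Noetherian Henselian local commutative ring, T a commutative R-algebra, and M a nonzero T-module which is finitely generated as an R-module. Then there exist finitely many nonzero T-submodules M₁, …, Mₙ of M such that M is the internal direct sum of M₁, …, Mₙ and, for each i, the quotient ring T / Ann_T(Mᵢ) is a local ring. -/
/-!
Splitting `M` repeatedly into `T`-submodules terminates, because by Nakayama every nonzero summand
uses up part of the finite-dimensional space `k ⊗[R] M`, `k` the residue field of `R`. So `M` is a
finite direct sum of indecomposable submodules `N`. For such an `N` the ring `T ⧸ Ann N` has only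
the idempotents `0` and `1`, and it is integral over `R` by Cayley–Hamilton.

Such a ring `A` is local: let `a : A` be a root of a monic `f : R[X]`. Modulo the maximal ideal,
`f` is `X ^ n * q` with `q(0) ≠ 0`, and since `R` is Henselian this lifts to a coprime factorization
`f = g * h`. As `A` has no nontrivial idempotents, `g(a) = 0` or `h(a) = 0`. In the first case
`1 - a` is a unit because `g(1)` is one, in the second `a` is a unit because `h(0)` is one.

The factorization exists over an étale `R`-algebra with a point whose residue field is `k`, and
étale algebras over a Henselian local ring have a section through every such point.
-/

open IsLocalRing Polynomial TensorProduct
open scoped Pointwise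

section HenselianLifting

universe u

variable {R K : Type u} [CommRing R] [HenselianLocalRing R] [Field K] [Algebra R K]

theorem exists_algHom_ofId_comp_eq_of_isStandardEtale {S : Type*} [CommRing S] [Algebra R S]
    [Algebra.IsStandardEtale R S] (hK : Function.Surjective (algebraMap R K)) (ψ : S →ₐ[R] K) :
    ∃ s : S →ₐ[R] R, (Algebra.ofId R K).comp s = ψ := by
  obtain ⟨⟨P⟩⟩ := ‹Algebra.IsStandardEtale R S›
  have hψx : P.HasMap (ψ P.x) := P.hasMap.map ψ
  have lift_root := ((HenselianLocalRing.TFAE R).out 0 2).1 ‹HenselianLocalRing R›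
  obtain ⟨a, ha_root, ha⟩ : ∃ a : R, P.f.IsRoot a ∧ algebraMap R K a = ψ P.x :=
    lift_root (algebraMap R K) hK P.f P.monic_f (ψ P.x) hψx.1 hψx.isUnit_derivative_f.ne_zero
  have : IsLocalHom (algebraMap R K) := hK.isLocalHom
  have hPa : P.HasMap a := by
    refine ⟨by rwa [coe_aeval_eq_eval], isUnit_of_map_unit (algebraMap R K) _ ?_⟩
    rw [← aeval_algebraMap_apply, ha]
    exact hψx.2
  refine ⟨(P.lift a hPa).comp P.equivRing.toAlgHom, P.hom_ext ?_⟩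
  simp [StandardEtalePair.lift_X, Algebra.ofId_apply, ha]

theorem exists_algHom_ofId_comp_eq_of_etale {S : Type*} [CommRing S] [Algebra R S]
    [Algebra.Etale R S] (hK : Function.Surjective (algebraMap R K)) (ψ : S →ₐ[R] K) :
    ∃ s : S →ₐ[R] R, (Algebra.ofId R K).comp s = ψ := by
  have : (RingHom.ker ψ).IsPrime := RingHom.ker_isPrime ψ
  obtain ⟨f, hf, _⟩ := Algebra.IsEtaleAt.exists_isStandardEtale (R := R) (RingHom.ker ψ)
  have hψf : IsUnit (ψ f) := isUnit_iff_ne_zero.2 hf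
  let ψf : Localization.Away f →ₐ[R] K :=
    IsLocalization.liftAlgHom (M := .powers f) (f := ψ) <| by
      rintro ⟨_, n, rfl⟩
      simpa using hψf.pow n
  obtain ⟨s, hs⟩ := exists_algHom_ofId_comp_eq_of_isStandardEtale hK ψf
  refine ⟨s.comp (IsScalarTower.toAlgHom R S (Localization.Away f)), ?_⟩
  rw [← AlgHom.comp_assoc, hs]
  ext x
  simp [ψf]

end HenselianLifting

section HenselianFactorization

variable {R : Type*} [CommRing R] [HenselianLocalRing R]

theorem exists_monic_mul_eq_of_map_eq_mul {f : R[X]} (hf : f.Monic)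
    {g₀ h₀ : (maximalIdeal R).ResidueField[X]} (hg₀ : g₀.Monic) (hh₀ : h₀.Monic)
    (hcop : IsCoprime g₀ h₀) (hmul : f.map (algebraMap R _) = g₀ * h₀) :
    ∃ g h : R[X], g.Monic ∧ h.Monic ∧ IsCoprime g h ∧ f = g * h ∧
      g.map (algebraMap R _) = g₀ ∧ h.map (algebraMap R _) = h₀ := by
  obtain ⟨S, _, _, _, Q, _, _, g, h, hQ, hg, hh, hgh, hgh_cop, hgQ, hhQ⟩ :=
    Algebra.exists_etale_bijective_residueFieldMap_and_map_eq_mul_and_isCoprime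
      (maximalIdeal R) f g₀ h₀ hf hg₀ hh₀ hmul hcop
  set ι := Ideal.ResidueField.mapₐ (maximalIdeal R) Q (Algebra.ofId R S) (Q.over_def _)
  have hκ : Function.Surjective (algebraMap R Q.ResidueField) := by
    rw [← ι.comp_algebraMap]
    exact hQ.2.comp (maximalIdeal R).algebraMap_residueField_surjective
  obtain ⟨s, hs⟩ := exists_algHom_ofId_comp_eq_of_etale hκ (IsScalarTower.toAlgHom R S _)
  have map_section (p : S[X]) (p₀ : (maximalIdeal R).ResidueField[X])
      (hp : p₀.map ι.toRingHom = p.map (algebraMap S Q.ResidueField)) :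
      (p.map s.toRingHom).map (algebraMap R _) = p₀ := by
    apply Polynomial.map_injective ι.toRingHom ι.toRingHom.injective
    rw [hp, Polynomial.map_map, Polynomial.map_map]
    congr 1
    ext x
    simpa [Algebra.ofId_apply] using DFunLike.congr_fun hs x
  refine ⟨g.map s.toRingHom, h.map s.toRingHom, hg.map _, hh.map _,
    hgh_cop.map (mapRingHom s.toRingHom), ?_, map_section g g₀ hgQ, map_section h h₀ hhQ⟩
  have hsR : s.toRingHom.comp (algebraMap R S) = RingHom.id R := s.comp_algebraMap
  rw [← Polynomial.map_mul, ← hgh, Polynomial.map_map, hsR, Polynomial.map_id]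

theorem exists_isCoprime_mul_eq_isUnit_eval {f : R[X]} (hf : f.Monic) :
    ∃ g h : R[X], IsCoprime g h ∧ f = g * h ∧ IsUnit (g.eval 1) ∧ IsUnit (h.eval 0) := by
  let κ := (maximalIdeal R).ResidueField
  have hf₀ : (f.map (algebraMap R κ)).Monic := hf.map _
  obtain ⟨q, hq, hXq⟩ := exists_eq_pow_rootMultiplicity_mul_and_not_dvd _ hf₀.ne_zero 0
  rw [C_0, sub_zero] at hq hXq
  obtain ⟨g, h, -, -, hcop, hgh, hg, hh⟩ := exists_monic_mul_eq_of_map_eq_mul hf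
    (monic_X_pow _) ((monic_X_pow _).of_mul_monic_left (hq ▸ hf₀))
    ((irreducible_X.coprime_iff_not_dvd.2 hXq).pow_left) hq
  have : IsLocalHom (algebraMap R κ) :=
    (maximalIdeal R).algebraMap_residueField_surjective.isLocalHom
  refine ⟨g, h, hcop, hgh, isUnit_of_map_unit (algebraMap R κ) _ ?_,
    isUnit_of_map_unit (algebraMap R κ) _ ?_⟩
  · rw [← eval_map_apply, hg]
    simp
  · rw [← eval_map_apply, hh, map_zero, isUnit_iff_ne_zero, ← coeff_zero_eq_eval_zero]
    exact mt X_dvd_iff.2 hXq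

end HenselianFactorization

section ConnectedIntegral

variable {R A : Type*} [CommRing R] [CommRing A] [Algebra R A]

theorem isUnit_sub_algebraMap_of_aeval_eq_zero {p : R[X]} {a : A} {r : R} (ha : aeval a p = 0)
    (hr : IsUnit (p.eval r)) : IsUnit (a - algebraMap R A r) := by
  have hdvd : a - algebraMap R A r ∣ aeval a p - algebraMap R A (p.eval r) := by
    simpa using map_dvd (aeval a) (X_sub_C_dvd_sub_C_eval (a := r) (p := p))
  rw [ha, zero_sub] at hdvd
  exact isUnit_of_dvd_unit hdvd (hr.map (algebraMap R A)).neg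

theorem eq_zero_or_eq_zero_of_isCoprime_of_mul_eq_zero
    (hA : ∀ e : A, IsIdempotentElem e → e = 0 ∨ e = 1) {x y : A} (hcop : IsCoprime x y)
    (hxy : x * y = 0) : x = 0 ∨ y = 0 := by
  obtain ⟨u, v, huv⟩ := hcop
  have hidem : IsIdempotentElem (u * x) := by
    change u * x * (u * x) = u * x
    linear_combination u * x * huv - u * v * hxy
  rcases hA _ hidem with h0 | h1
  · left; linear_combination -x * huv + x * h0 + v * hxy
  · right; linear_combination -y * h1 + u * hxy

theorem isLocalRing_of_isIntegral_of_isIdempotentElem [HenselianLocalRing R]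
    [Algebra.IsIntegral R A] [Nontrivial A]
    (hA : ∀ e : A, IsIdempotentElem e → e = 0 ∨ e = 1) : IsLocalRing A := by
  refine .of_isUnit_or_isUnit_one_sub_self fun a ↦ ?_
  obtain ⟨f, hf, hfa⟩ := Algebra.IsIntegral.isIntegral (R := R) a
  obtain ⟨g, h, hcop, rfl, hg, hh⟩ := exists_isCoprime_mul_eq_isUnit_eval hf
  have hmul : aeval a g * aeval a h = 0 := by rw [← map_mul]; exact hfa
  rcases eq_zero_or_eq_zero_of_isCoprime_of_mul_eq_zero hA (hcop.map (aeval a).toRingHom) hmul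
    with hga | hha
  · right
    simpa using (isUnit_sub_algebraMap_of_aeval_eq_zero hga hg).neg
  · left
    simpa using isUnit_sub_algebraMap_of_aeval_eq_zero hha hh

end ConnectedIntegral

section Indecomposable

variable {α : Type*} [Lattice α] [OrderBot α]

/-- `b` has a nonzero complement in `a`: for submodules, `a = b ⊕ c` with `c ≠ 0`. The case
`b = ⊥` is allowed. Accessibility of `a` for this relation means that iterated splitting of `a`
terminates. -/
def IsProperSummand (b a : α) : Prop :=
  ∃ c, c ≠ ⊥ ∧ Disjoint b c ∧ b ⊔ c = a

/-- `a` is nonzero and is not the join of two disjoint nonzero elements; for a submodule, this is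
indecomposability as a module. -/
def IsIndecomposable (a : α) : Prop :=
  a ≠ ⊥ ∧ ∀ b, IsProperSummand b a → b = ⊥

theorem exists_supIndep_isIndecomposable_of_acc [IsModularLattice α] {a : α}
    (ha : Acc IsProperSummand a) :
    ∃ s : Finset α, s.SupIndep id ∧ s.sup id = a ∧ ∀ b ∈ s, IsIndecomposable b := by
  classical
  induction ha with
  | intro a _ ih =>
  by_cases ha_bot : a = ⊥
  · exact ⟨∅, Finset.supIndep_empty _, by simp [ha_bot], by simp⟩
  by_cases ha_ind : IsIndecomposable a
  · exact ⟨{a}, Finset.supIndep_singleton _ _, by simp, by simpa⟩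
  obtain ⟨b, ⟨c, hc, hbc, rfl⟩, hb⟩ : ∃ b, IsProperSummand b a ∧ b ≠ ⊥ := by
    simpa [IsIndecomposable, ha_bot] using ha_ind
  obtain ⟨s, hs, hs_sup, hs_ind⟩ := ih b ⟨c, hc, hbc, rfl⟩
  obtain ⟨t, ht, ht_sup, ht_ind⟩ := ih c ⟨b, hb, hbc.symm, sup_comm c b⟩
  refine ⟨s ∪ t, hs.union ht (by rwa [hs_sup, ht_sup]), ?_, ?_⟩
  · rw [Finset.sup_union, hs_sup, ht_sup]
  · intro d hd
    exact (Finset.mem_union.1 hd).elim (hs_ind d) (ht_ind d)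

end Indecomposable

section Submodule

variable {T M : Type*} [Ring T] [AddCommGroup M] [Module T M]

/-- The sum of two submodules with zero intersection is their direct sum. Unlike in
`Submodule.prodEquivOfIsCompl`, the sum need not be the whole module. -/
noncomputable def prodEquivSupOfDisjoint {A B : Submodule T M} (h : Disjoint A B) :
    (A × B) ≃ₗ[T] ↥(A ⊔ B) :=
  (LinearEquiv.ofInjective (A.subtype.coprod B.subtype)
    (LinearMap.ker_eq_bot.1 <| by
      rw [LinearMap.ker_coprod_of_disjoint_range] <;> simp [h])).trans
    (LinearEquiv.ofEq _ _ <| by rw [LinearMap.range_coprod, A.range_subtype, B.range_subtype])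

theorem isInternal_of_supIndep_of_sup_eq_top {ι : Type*} [DecidableEq ι]
    {s : Finset (Submodule T M)} (hs : s.SupIndep id) (hs_sup : s.sup id = ⊤) (e : ι ≃ s) :
    DirectSum.IsInternal fun i ↦ (e i : Submodule T M) := by
  refine DirectSum.isInternal_submodule_of_iSupIndep_of_iSup_eq_top
    (hs.independent.comp e.injective) ?_
  rw [e.iSup_comp (g := ((↑) : s → Submodule T M)), ← hs_sup, Finset.sup_id_eq_sSup, sSup_eq_iSup']
  rfl

end Submodule

section IdempotentSplitting

variable {T M : Type*} [CommRing T] [AddCommGroup M] [Module T M] {N : Submodule T M} {t : T}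

theorem smul_eq_bot_iff_mem_annihilator : t • N = ⊥ ↔ t ∈ N.annihilator := by
  rw [Submodule.mem_annihilator, Submodule.eq_bot_iff]
  simp [Submodule.mem_smul_pointwise_iff_exists]

theorem smul_sup_one_sub_smul (t : T) (N : Submodule T M) : t • N ⊔ (1 - t) • N = N := by
  refine le_antisymm (sup_le (N.smul_le_self_of_tower t) (N.smul_le_self_of_tower _)) fun n hn ↦ ?_
  have hsum : t • n + (1 - t) • n = n := by module
  rw [← hsum]
  exact Submodule.add_mem_sup (Submodule.smul_mem_pointwise_smul n t N hn)
    (Submodule.smul_mem_pointwise_smul n (1 - t) N hn)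

theorem disjoint_smul_one_sub_smul (ht : t * (1 - t) ∈ N.annihilator) :
    Disjoint (t • N) ((1 - t) • N) := by
  rw [Submodule.disjoint_def]
  rintro x ⟨m, hm, hmx⟩ ⟨n, hn, hnx⟩
  have hm0 := Submodule.mem_annihilator.1 ht m hm
  have hn0 := Submodule.mem_annihilator.1 ht n hn
  replace hmx : t • m = x := hmx
  replace hnx : (1 - t) • n = x := hnx
  calc x = t • x + (1 - t) • x := by module
    _ = t • (1 - t) • n + (1 - t) • t • m := by rw [hmx, hnx]
    _ = (t * (1 - t)) • n + (t * (1 - t)) • m := by module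
    _ = 0 := by rw [hm0, hn0, add_zero]

theorem eq_zero_or_eq_one_of_isIdempotentElem_quotient_annihilator
    (hN : IsIndecomposable N) {e : T ⧸ N.annihilator} (he : IsIdempotentElem e) :
    e = 0 ∨ e = 1 := by
  obtain ⟨t, rfl⟩ := Ideal.Quotient.mk_surjective e
  have ht : t * (1 - t) ∈ N.annihilator := by
    rw [← Ideal.Quotient.eq_zero_iff_mem, map_mul, map_sub, map_one, he.mul_one_sub_self]
  by_cases hbot : (1 - t) • N = ⊥
  · right
    rw [smul_eq_bot_iff_mem_annihilator] at hbot
    simpa using (Ideal.Quotient.eq.2 hbot).symm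
  · left
    have hsummand : IsProperSummand (t • N) N :=
      ⟨(1 - t) • N, hbot, disjoint_smul_one_sub_smul ht, smul_sup_one_sub_smul t N⟩
    exact Ideal.Quotient.eq_zero_iff_mem.2
      (smul_eq_bot_iff_mem_annihilator.1 (hN.2 _ hsummand))

end IdempotentSplitting

theorem finrank_residueField_tensorProduct_lt_prod {R : Type*} [CommRing R] [IsLocalRing R]
    (M N : Type*) [AddCommGroup M] [Module R M] [Module.Finite R M]
    [AddCommGroup N] [Module R N] [Module.Finite R N] [Nontrivial N] :
    Module.finrank (ResidueField R) (ResidueField R ⊗[R] M) <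
      Module.finrank (ResidueField R) (ResidueField R ⊗[R] (M × N)) := by
  have : Nontrivial (ResidueField R ⊗[R] N) := by
    rw [← not_subsingleton_iff_nontrivial, subsingleton_tensorProduct]
    exact not_subsingleton N
  rw [(TensorProduct.prodRight R (ResidueField R) (ResidueField R) M N).finrank_eq,
    Module.finrank_prod]
  exact Nat.lt_add_of_pos_right Module.finrank_pos

section FiniteOverBase

variable {R T M : Type*} [CommRing R] [CommRing T] [Algebra R T]
  [AddCommGroup M] [Module R M] [Module T M] [IsScalarTower R T M]

theorem acc_isProperSummand_of_finite [IsLocalRing R] (N : Submodule T M) [Module.Finite R N] :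
    Acc IsProperSummand N := by
  induction hn : Module.finrank (ResidueField R) (ResidueField R ⊗[R] N)
    using Nat.strong_induction_on generalizing N with
  | h n ih =>
  refine ⟨N, fun A ⟨B, hB, hAB, hN⟩ ↦ ?_⟩
  subst hN hn
  let e : (A × B) ≃ₗ[R] ↥(A ⊔ B) := (prodEquivSupOfDisjoint hAB).restrictScalars R
  have : Module.Finite R (A × B) := .equiv e.symm
  have : Module.Finite R A := .of_surjective (.fst R A B) Prod.fst_surjective
  have : Module.Finite R B := .of_surjective (.snd R A B) Prod.snd_surjective
  have : Nontrivial B := Submodule.nontrivial_iff_ne_bot.2 hB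
  refine ih _ ?_ A rfl
  rw [← (e.baseChange R (ResidueField R) _ _).finrank_eq]
  exact finrank_residueField_tensorProduct_lt_prod A B

variable (R T M) in
theorem isIntegral_quotient_annihilator [Module.Finite R M] :
    Algebra.IsIntegral R (T ⧸ Module.annihilator T M) := by
  let φ : T ⧸ Module.annihilator T M →ₐ[R] Module.End R M :=
    Ideal.Quotient.liftₐ _ (Algebra.lsmul R R M) fun t ht ↦
      LinearMap.ext (Module.mem_annihilator.1 ht)
  have hφ : Function.Injective φ := by
    refine (injective_iff_map_eq_zero φ).2 fun x hx ↦ ?_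
    obtain ⟨t, rfl⟩ := Ideal.Quotient.mk_surjective x
    exact Ideal.Quotient.eq_zero_iff_mem.2 (Module.mem_annihilator.2 (LinearMap.congr_fun hx))
  exact .of_injective φ hφ

variable (R) in
theorem isLocalRing_quotient_annihilator_of_isIndecomposable [HenselianLocalRing R]
    [Module.Finite R M] {N : Submodule T M} (hN : IsIndecomposable N) :
    IsLocalRing (T ⧸ N.annihilator) := by
  have : Algebra.IsIntegral R (T ⧸ Module.annihilator T M) := isIntegral_quotient_annihilator R T M
  have hann : Module.annihilator T M ≤ N.annihilator :=
    N.subtype.annihilator_le_of_injective N.injective_subtype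
  have : Algebra.IsIntegral R (T ⧸ N.annihilator) := .of_surjective
    (Ideal.Quotient.factorₐ R hann) (Ideal.Quotient.factor_surjective hann)
  have : Nontrivial (T ⧸ N.annihilator) :=
    Ideal.Quotient.nontrivial_iff.2 (mt Submodule.annihilator_eq_top_iff.1 hN.1)
  exact isLocalRing_of_isIntegral_of_isIdempotentElem (R := R) fun _ ↦
    eq_zero_or_eq_one_of_isIdempotentElem_quotient_annihilator hN

end FiniteOverBase

theorem module_over_henselian_splits_with_local_supports_general
    (R T M : Type*) [CommRing R] [HenselianLocalRing R] [CommRing T] [Algebra R T]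
    [AddCommGroup M] [Module R M] [Module T M] [IsScalarTower R T M] [Module.Finite R M] :
    ∃ (n : ℕ) (Mi : Fin n → Submodule T M),
      (∀ i, Mi i ≠ ⊥) ∧ DirectSum.IsInternal Mi ∧
      ∀ i, IsLocalRing (T ⧸ Module.annihilator T ↥(Mi i)) := by
  obtain ⟨s, hs_indep, hs_sup, hs⟩ := exists_supIndep_isIndecomposable_of_acc
    (acc_isProperSummand_of_finite (R := R) (⊤ : Submodule T M))
  let e : Fin s.card ≃ s := s.equivFin.symm
  exact ⟨s.card, fun i ↦ e i, fun i ↦ (hs _ (e i).2).1,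
    isInternal_of_supIndep_of_sup_eq_top hs_indep hs_sup e,
    fun i ↦ isLocalRing_quotient_annihilator_of_isIndecomposable R (hs _ (e i).2)⟩

/-- Splitting of modules over a Henselian local base: if `R` is a Noetherian Henselian
local ring, `T` a commutative `R`-algebra and `M` a nonzero `T`-module which is finitely
generated as an `R`-module, then `M` is an internal direct sum of finitely many nonzero
`T`-submodules `M₁, …, Mₙ` such that each quotient ring `T / Ann_T(Mᵢ)` is local. -/
theorem module_over_henselian_splits_with_local_supports
    (R T M : Type*) [CommRing R] [IsNoetherianRing R] [HenselianLocalRing R]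
    [CommRing T] [Algebra R T]
    [AddCommGroup M] [Module R M] [Module T M] [IsScalarTower R T M]
    [Module.Finite R M] [Nontrivial M] :
    ∃ (n : ℕ) (Mi : Fin n → Submodule T M),
      (∀ i, Mi i ≠ ⊥) ∧ DirectSum.IsInternal Mi ∧
      ∀ i, IsLocalRing (T ⧸ Module.annihilator T ↥(Mi i)) :=
  module_over_henselian_splits_with_local_supports_general R T M
end

section
/- Let R be a Henselian local commutative ring with maximal ideal m and residue field κ = R/m, and let S be an étale R-algebra (i.e. formally étale and of finite presentation over R). Then every R-algebra homomorphism u : S → κ lifts to an R-algebra homomorphism σ : S → R, meaning π ∘ σ = u where π : R → κ is the residue map. -/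
universe u

/-!
Near a point, an étale algebra is standard étale, `(R[X]/f)[1/g]` with `f` monic and its derivative
invertible. A map from this algebra to `B` is a root of `f` in `B` at which `g` is a unit, and that
root is simple. If `R` is Henselian at the kernel of a surjection `R → B`, the root lifts to `R`,
and `g` remains a unit at the lift because `R → B` reflects units.
-/

open Polynomial

theorem isLocalHom_of_surjective_of_ker_le_jacobson_bot {R B : Type*} [CommRing R] [CommRing B]
    {φ : R →+* B} (hφ : Function.Surjective φ) (hker : RingHom.ker φ ≤ Ideal.jacobson ⊥) :
    IsLocalHom φ := by
  have := isLocalHom_of_le_jacobson_bot _ hker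
  have hcomp : (RingHom.quotientKerEquivOfSurjective hφ : R ⧸ RingHom.ker φ →+* B).comp
      (Ideal.Quotient.mk (RingHom.ker φ)) = φ := RingHom.ext fun _ ↦ rfl
  rw [← hcomp]
  infer_instance

section Henselian

variable {R S B : Type*} [CommRing R] [CommRing S] [CommRing B] [Algebra R S] [Algebra R B]
  [HenselianRing R (RingHom.ker (algebraMap R B))]

theorem isLocalHom_algebraMap_of_henselianRing_ker
    (hB : Function.Surjective (algebraMap R B)) : IsLocalHom (algebraMap R B) :=
  isLocalHom_of_surjective_of_ker_le_jacobson_bot hB HenselianRing.jac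

theorem exists_isRoot_algebraMap_eq_of_isUnit_derivative
    (hB : Function.Surjective (algebraMap R B)) {f : R[X]} (hf : f.Monic) {b : B}
    (hroot : aeval b f = 0) (hsimple : IsUnit (aeval b (derivative f))) :
    ∃ a : R, f.IsRoot a ∧ algebraMap R B a = b := by
  have := isLocalHom_algebraMap_of_henselianRing_ker hB
  obtain ⟨a₀, rfl⟩ := hB b
  rw [aeval_algebraMap_apply_eq_algebraMap_eval] at hroot hsimple
  obtain ⟨a, ha, haa₀⟩ := HenselianRing.is_henselian f hf a₀ hroot
    ((hsimple.of_map (algebraMap R B)).map (Ideal.Quotient.mk (RingHom.ker (algebraMap R B))))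
  exact ⟨a, ha, (RingHom.sub_mem_ker_iff _).mp haa₀⟩

theorem exists_hasMap_algebraMap_eq (hB : Function.Surjective (algebraMap R B))
    (P : StandardEtalePair R) {b : B} (hb : P.HasMap b) :
    ∃ a : R, P.HasMap a ∧ algebraMap R B a = b := by
  have := isLocalHom_algebraMap_of_henselianRing_ker hB
  obtain ⟨a, ha, rfl⟩ :=
    exists_isRoot_algebraMap_eq_of_isUnit_derivative hB P.monic_f hb.1 hb.isUnit_derivative_f
  have hg : IsUnit (aeval a P.g) :=
    .of_map (algebraMap R B) _ (by simpa only [aeval_algebraMap_apply] using hb.2)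
  exact ⟨a, ⟨by rwa [coe_aeval_eq_eval], hg⟩, rfl⟩

theorem exists_algHom_lift_of_isStandardEtale (hB : Function.Surjective (algebraMap R B))
    [Algebra.IsStandardEtale R S] (u : S →ₐ[R] B) :
    ∃ σ : S →ₐ[R] R, (Algebra.ofId R B).comp σ = u := by
  obtain ⟨P⟩ := Algebra.IsStandardEtale.nonempty_standardEtalePresentation (R := R) (S := S)
  obtain ⟨a, ha, hau⟩ := exists_hasMap_algebraMap_eq hB P.P (P.hasMap.map u)
  exact ⟨(P.lift a ha).comp P.equivRing, P.hom_ext (by simpa [Algebra.ofId_apply] using hau)⟩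

theorem etale_lift_of_henselian_general [IsLocalRing B]
    (hB : Function.Surjective (algebraMap R B)) [Algebra.FinitePresentation R S] (u : S →ₐ[R] B)
    [Algebra.IsEtaleAt R ((IsLocalRing.maximalIdeal B).comap u)] :
    ∃ σ : S →ₐ[R] R, (Algebra.ofId R B).comp σ = u := by
  obtain ⟨f, hf, _⟩ := Algebra.IsEtaleAt.exists_isStandardEtale (R := R)
    ((IsLocalRing.maximalIdeal B).comap u)
  have huf : IsUnit (u f) := IsLocalRing.notMem_maximalIdeal.mp hf
  obtain ⟨τ, hτ⟩ := exists_algHom_lift_of_isStandardEtale hB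
    (IsLocalization.Away.liftAlgHom (S := Localization.Away f) f huf)
  refine ⟨τ.comp (IsScalarTower.toAlgHom R S (Localization.Away f)), ?_⟩
  rw [← AlgHom.comp_assoc, hτ]
  ext s
  simp

end Henselian

instance henselianRing_ker_algebraMap_residueField (R : Type*) [CommRing R]
    [HenselianLocalRing R] :
    HenselianRing R (RingHom.ker (algebraMap R (IsLocalRing.ResidueField R))) := by
  rw [IsLocalRing.ResidueField.algebraMap_eq, IsLocalRing.ker_residue]
  infer_instance

/-- Lifting along étale algebras over a Henselian local ring: if `R` is Henselian local
with residue field `κ` and `S` is an étale `R`-algebra (formally étale and of finite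
presentation), then every `R`-algebra homomorphism `u : S → κ` lifts to an `R`-algebra
homomorphism `σ : S → R` with `π ∘ σ = u`, where `π : R → κ` is the residue map. -/
theorem etale_lift_of_henselian
    (R S : Type u) [CommRing R] [HenselianLocalRing R]
    [CommRing S] [Algebra R S] [Algebra.FormallyEtale R S]
    [Algebra.FinitePresentation R S]
    (u : S →ₐ[R] IsLocalRing.ResidueField R) :
    ∃ σ : S →ₐ[R] R, ∀ s : S, IsLocalRing.residue R (σ s) = u s := by
  obtain ⟨σ, hσ⟩ := etale_lift_of_henselian_general IsLocalRing.residue_surjective u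
  exact ⟨σ, DFunLike.congr_fun hσ⟩
end
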